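/- (A_r Pfaff–Saalschütz summation.) Let r ≥ 1, let M be a non-negative integer, and let a_1,…,a_r, b, c, x_1,…,x_r ∈ ℂ be generic (no denominator vanishing, with x_i−x_j ∉ ℤ for i≠j). Then Σ over all k = (k_1,…,k_r) with k_i ≥ 0 and |k| ≤ M of [ ∏_{1≤i<j≤r} ((x_i+k_i−x_j−k_j)/(x_i−x_j)) · ∏_{i,j=1}^r ((a_j+x_i−x_j)_{k_i}/(1+x_i−x_j)_{k_i}) · ∏_{i=1}^r ((b+x_i)_{k_i}/(c+x_i)_{k_i}) · ((−M)_{|k|}/(a_1+⋯+a_r+b+1−M−c)_{|k|}) ] = ((c−b)_M/(c−a_1−⋯−a_r−b)_M) · ∏_{i=1}^r ((c+x_i−a_i)_M/(c+x_i)_M). -/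

import Mathlib

open Complex

/-- The shifted factorial `(a)_k = Γ(a+k)/Γ(a)` for integer `k`, given by the
(generically equal) product formulas; for `k ≥ 0` it is `a(a+1)⋯(a+k−1)`. -/
noncomputable def poch (a : ℂ) (k : ℤ) : ℂ :=
  if 0 ≤ k then ∏ j ∈ Finset.range k.toNat, (a + (j : ℂ))
  else (∏ j ∈ Finset.range (-k).toNat, (a - 1 - (j : ℂ)))⁻¹
open Finset in
theorem pf_sum {ι : Type*} [Fintype ι] [DecidableEq ι] (x y : ι → ℂ) (hy : Function.Injective y) :
    ∑ i, (∏ j, (y i - x j)) / ∏ j ∈ univ.erase i, (y i - y j) = ∑ j, (y j - x j) := by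
  rcases isEmpty_or_nonempty ι with h | h
  · simp
  have hpos : 0 < (univ : Finset ι).card := Finset.card_pos.mpr univ_nonempty
  set P : Polynomial ℂ := ∏ j, (Polynomial.X - Polynomial.C (x j)) with hP
  set Q : Polynomial ℂ := ∏ j, (Polynomial.X - Polynomial.C (y j)) with hQ
  have hPm : P.Monic := Polynomial.monic_prod_X_sub_C x univ
  have hQm : Q.Monic := Polynomial.monic_prod_X_sub_C y univ
  have hPd : P.degree = (univ : Finset ι).card := by
    rw [hP, Polynomial.degree_prod]; simp
  have hQd : Q.degree = (univ : Finset ι).card := by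
    rw [hQ, Polynomial.degree_prod]; simp
  have hlt : (P - Q).degree < (univ : Finset ι).card := by
    rw [← hPd]
    exact Polynomial.degree_sub_lt_left (by rw [hPd, hQd]) hPm.ne_zero
      (by rw [hPm.leadingCoeff, hQm.leadingCoeff])
  have key := Lagrange.coeff_eq_sum (v := y) (s := univ) hy.injOn hlt
  rw [Polynomial.coeff_sub, hP, hQ, Polynomial.prod_X_sub_C_coeff_card_pred _ _ hpos,
    Polynomial.prod_X_sub_C_coeff_card_pred _ _ hpos] at key
  rw [sum_sub_distrib]
  have h2 : ∀ i, Polynomial.eval (y i) (P - Q) = ∏ j, (y i - x j) := by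
    intro i
    rw [Polynomial.eval_sub, hP, hQ, Polynomial.eval_prod, Polynomial.eval_prod]
    rw [Finset.prod_eq_zero (i := i) (mem_univ i) (f := fun j => Polynomial.eval (y i) (Polynomial.X - Polynomial.C (y j)))]
    · simp
    · simp
  rw [← hP, ← hQ] at key
  simp only [h2] at key
  rw [← key]; ring

open Finset in
theorem pf_one {ι : Type*} [Fintype ι] [DecidableEq ι] (α y : ι → ℂ) (b c : ℂ)
    (hy : Function.Injective y) (hc : ∀ i, c + y i ≠ 0) :
    (c - b) * ∏ j, (c - α j) / (c + y j) = (c - b - ∑ j, (α j + y j)) +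
      ∑ i, ((b + y i) / (c + y i)) * ((∏ j, (α j + y i)) / ∏ j ∈ univ.erase i, (y i - y j)) := by
  have h := pf_sum (ι := Option ι) (fun o => o.elim (-b) (fun j => - α j))
    (fun o => o.elim (-c) y) (by
      rintro (_ | i) (_ | j) hij
      · rfl
      · exact absurd (by simpa using congrArg (c + ·) hij.symm) (hc j)
      · exact absurd (by simpa using congrArg (c + ·) hij) (hc i)
      · simpa using hy hij)
  have e1 : (univ : Finset (Option ι)).erase none = univ.map Function.Embedding.some := by
    ext o; cases o <;> simp
  have e2 : ∀ i : ι, (univ : Finset (Option ι)).erase (some i) =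
      insert none ((univ.erase i).map Function.Embedding.some) := by
    intro i; ext o; cases o <;> simp
  simp only [Fintype.sum_option, Fintype.prod_option, e1, e2, Option.elim_some, Option.elim_none, Finset.prod_map,
    Function.Embedding.some_apply] at h
  have e3 : ∏ j, (-c - - α j) / (-c - y j) = ∏ j, (c - α j) / (c + y j) := by
    refine Finset.prod_congr rfl fun j _ => ?_
    rw [← neg_div_neg_eq]; congr 1 <;> ring
  have e4 : ∀ i, (∏ j ∈ insert none ((univ.erase i).map Function.Embedding.some),
      (y i - Option.elim j (-c) y)) = (c + y i) * ∏ j ∈ univ.erase i, (y i - y j) := by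
    intro i
    rw [Finset.prod_insert (by simp), Finset.prod_map]
    simp; left; ring
  have e5 : ∑ i, (y i - -b) * (∏ j, (y i - - α j)) / ((c + y i) * ∏ j ∈ univ.erase i, (y i - y j))
      = ∑ i, ((b + y i) / (c + y i)) * ((∏ j, (α j + y i)) / ∏ j ∈ univ.erase i, (y i - y j)) := by
    refine Finset.sum_congr rfl fun i _ => ?_
    rw [div_mul_div_comm]
    congr 2
    · ring
    · exact Finset.prod_congr rfl fun j _ => by ring
  have e6 : ∑ j, (y j - - α j) = ∑ j, (α j + y j) :=
    Finset.sum_congr rfl fun j _ => by ring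
  simp only [e4] at h
  rw [e5, e6, mul_div_assoc, ← Finset.prod_div_distrib, e3] at h
  linear_combination -h

/-- Rising factorial, natural index. -/
noncomputable def rf (a : ℂ) (n : ℕ) : ℂ := ∏ j ∈ Finset.range n, (a + (j : ℂ))

theorem rf_zero (a : ℂ) : rf a 0 = 1 := by simp [rf]
theorem rf_succ (a : ℂ) (n : ℕ) : rf a (n+1) = rf a n * (a + n) := by
  simp [rf, Finset.prod_range_succ]
theorem rf_succ' (a : ℂ) (n : ℕ) : rf a (n+1) = a * rf (a+1) n := by
  simp only [rf, Finset.prod_range_succ']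
  rw [mul_comm]; congr 1
  · simp
  · exact Finset.prod_congr rfl fun j _ => by push_cast; ring
theorem rf_one (n : ℕ) : rf 1 n = n.factorial := by
  induction n with
  | zero => simp [rf]
  | succ n ih => rw [rf_succ, ih, Nat.factorial_succ]; push_cast; ring
theorem rf_ne (a : ℂ) (n : ℕ) (h : rf a n ≠ 0) (m : ℕ) (hm : m < n) : a + m ≠ 0 := by
  rw [rf, Finset.prod_ne_zero_iff] at h
  exact h m (by simpa using hm)

theorem rf_rev (M : ℕ) (y : ℂ) (n : ℕ) (hn : n ≤ M) :
    rf (1 - M - y) n * rf y (M - n) = (-1) ^ n * rf y M := by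
  induction n with
  | zero => simp [rf_zero]
  | succ n ih =>
    have h1 : M - n = (M - (n+1)) + 1 := by omega
    rw [h1, rf_succ y] at ih
    rw [rf_succ, pow_succ]
    have h2 : ((M - (n+1) : ℕ) : ℂ) = M - (n + 1) := by push_cast [Nat.cast_sub hn]; ring
    have := ih (by omega)
    rw [h2] at this
    linear_combination - this

/-- difference product -/
noncomputable def DD {r : ℕ} (y : Fin r → ℂ) : ℂ :=
  ∏ i : Fin r, ∏ j : Fin r, if i < j then y i - y j else 1

open Finset in
theorem DD_update_aux {r : ℕ} (i : Fin r) : ∃ (C : (Fin r → ℂ) → ℂ) (s : ℂ),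
    (∀ y z, C (Function.update y i z) = C y) ∧
    ∀ y, DD y = C y * (s * ∏ j ∈ univ.erase i, (y i - y j)) := by
  refine ⟨fun y => ∏ p ∈ univ.erase i, ∏ q ∈ univ.erase i, if p < q then y p - y q else 1,
    ∏ j ∈ univ.erase i, if i < j then 1 else -1, ?_, ?_⟩
  · intro y z
    refine prod_congr rfl fun p hp => prod_congr rfl fun q hq => ?_
    rw [Function.update_of_ne (ne_of_mem_erase hp), Function.update_of_ne (ne_of_mem_erase hq)]
  · intro y
    rw [DD, ← mul_prod_erase _ _ (mem_univ i)]
    rw [← mul_prod_erase _ _ (mem_univ i)]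
    simp only [lt_irrefl, if_false, one_mul]
    have : ∀ p ∈ univ.erase i, (∏ j, if p < j then y p - y j else 1) =
        (if p < i then y p - y i else 1) * ∏ q ∈ univ.erase i, if p < q then y p - y q else 1 := by
      intro p _
      rw [← mul_prod_erase _ _ (mem_univ i)]
    rw [prod_congr rfl this, prod_mul_distrib, ← mul_assoc, ← prod_mul_distrib, mul_comm]
    congr 1
    rw [← prod_mul_distrib]
    refine prod_congr rfl fun j hj => ?_
    rcases lt_or_gt_of_ne (ne_of_mem_erase hj) with h | h
    · simp [h, h.not_gt]
    · simp [h, h.not_gt]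

open Finset in
theorem DD_update {r : ℕ} (i : Fin r) (y : Fin r → ℂ) (z : ℂ) :
    DD (Function.update y i z) * ∏ j ∈ univ.erase i, (y i - y j) =
      DD y * ∏ j ∈ univ.erase i, (z - y j) := by
  obtain ⟨C, s, h1, h2⟩ := DD_update_aux i
  rw [h2, h2, h1]
  have : ∏ j ∈ univ.erase i, (Function.update y i z i - Function.update y i z j) =
      ∏ j ∈ univ.erase i, (z - y j) := by
    refine prod_congr rfl fun j hj => ?_
    rw [Function.update_self, Function.update_of_ne (ne_of_mem_erase hj)]
  rw [this]; ring

theorem coef_id (z : ℂ) (M N : ℕ) (hN : N ≤ M + 1) :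
    ((M + 1 - N : ℕ) : ℂ) * (rf (z+1) (M - N) * (z - N)) / (M + 1 - N).factorial +
      N * (rf (z+1) (M + 1 - N) / (M + 1 - N).factorial) =
      (M + 1) * (rf z (M + 1 - N) / (M + 1 - N).factorial) := by
  have hM : (M : ℂ) + 1 = N + (M + 1 - N : ℕ) := by
    push_cast [Nat.cast_sub hN]; ring
  rw [hM]
  have h2 : M - N = (M + 1 - N) - 1 := by omega
  rw [h2]
  generalize M + 1 - N = n
  have := n.factorial_ne_zero
  cases n with
  | zero => simp [rf_zero]
  | succ n =>
    rw [rf_succ' z, rf_succ (z+1)]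
    simp only [Nat.add_sub_cancel]
    field_simp
    push_cast
    ring

/-- single-row factor -/
noncomputable def gg {r : ℕ} (a x : Fin r → ℂ) (b c : ℂ) (i : Fin r) (n : ℕ) : ℂ :=
  (∏ j, rf (a j + x i - x j) n / rf (1 + x i - x j) n) * (rf (b + x i) n / rf (c + x i) n)

theorem gg_succ {r : ℕ} (a x : Fin r → ℂ) (b c : ℂ) (i : Fin r) (n : ℕ) :
    gg a x b c i (n+1) = gg a x b c i n *
      ((∏ j, (a j - x j + (x i + n))) / (∏ j, (x i + (n + 1 : ℕ) - x j)) *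
        ((b + (x i + n)) / (c + (x i + n)))) := by
  simp only [gg, rf_succ, ← Finset.prod_div_distrib]
  have : ∀ j, rf (a j + x i - x j) n * (a j + x i - x j + n) /
      (rf (1 + x i - x j) n * (1 + x i - x j + n)) =
      rf (a j + x i - x j) n / rf (1 + x i - x j) n *
      ((a j - x j + (x i + n)) / (x i + (n + 1 : ℕ) - x j)) := by
    intro j
    rw [mul_div_mul_comm]; congr 2
    · ring
    · push_cast; ring
  simp only [this, Finset.prod_mul_distrib]
  rw [mul_div_mul_comm, add_assoc b, add_assoc c]
  ring

/-- the summand without the `M`-dependent factor -/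
noncomputable def uu {r : ℕ} (a x : Fin r → ℂ) (b c : ℂ) (k : Fin r → ℕ) : ℂ :=
  DD (fun i => x i + k i) / DD x * ∏ i, gg a x b c i (k i)

open Finset in
theorem uu_shift {r : ℕ} (a x : Fin r → ℂ) (b c : ℂ)
    (hx : ∀ i j : Fin r, i ≠ j → ∀ m : ℤ, x i - x j ≠ (m : ℂ)) (k : Fin r → ℕ) (i : Fin r) :
    uu a x b c k * (((b + (x i + k i)) / (c + (x i + k i))) *
      ((∏ j, (a j - x j + (x i + k i))) / ∏ j ∈ univ.erase i, ((x i + k i) - (x j + k j)))) =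
    uu a x b c (Function.update k i (k i + 1)) *
      ((∏ j, (x i + (k i + 1 : ℕ) - x j)) /
        ∏ j ∈ univ.erase i, ((x i + (k i + 1 : ℕ)) - (x j + k j))) := by
  have hne : ∀ (m : ℕ), ∏ j ∈ univ.erase i, ((x i + (m : ℂ)) - (x j + k j)) ≠ 0 := by
    intro m
    rw [prod_ne_zero_iff]
    intro j hj h
    apply hx i j (ne_of_mem_erase hj).symm ((k j : ℤ) - m)
    push_cast
    linear_combination h
  have hne2 : ∏ j, (x i + (k i + 1 : ℕ) - x j) ≠ 0 := by
    rw [prod_ne_zero_iff]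
    intro j _ h
    by_cases hij : i = j
    · subst hij
      have : ((k i + 1 : ℕ) : ℂ) ≠ 0 := Nat.cast_ne_zero.mpr (Nat.succ_ne_zero _)
      apply this; linear_combination h
    · apply hx i j hij (-(k i + 1 : ℕ))
      push_cast at h ⊢
      linear_combination h
  have hD := DD_update i (fun j => x j + (k j : ℂ)) (x i + (k i + 1 : ℕ))
  have hfun : (fun j => x j + ((Function.update k i (k i + 1) j : ℕ) : ℂ)) =
      Function.update (fun j => x j + (k j : ℂ)) i (x i + (k i + 1 : ℕ)) := by
    funext j
    by_cases h : j = i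
    · subst h; simp
    · simp [h]
  have hprod : ∏ j, gg a x b c j (Function.update k i (k i + 1) j) =
      (∏ j, gg a x b c j (k j)) *
      ((∏ j, (a j - x j + (x i + k i))) / (∏ j, (x i + (k i + 1 : ℕ) - x j)) *
        ((b + (x i + k i)) / (c + (x i + k i)))) := by
    rw [← mul_prod_erase _ _ (mem_univ i), ← mul_prod_erase _ (fun j => gg a x b c j (k j)) (mem_univ i)]
    have hrest : ∏ j ∈ univ.erase i, gg a x b c j (Function.update k i (k i + 1) j) =
        ∏ j ∈ univ.erase i, gg a x b c j (k j) :=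
      prod_congr rfl (fun j hj => by rw [Function.update_of_ne (ne_of_mem_erase hj)])
    rw [hrest, Function.update_self, gg_succ]
    ring
  have h1 := hne (k i)
  have h2 := hne (k i + 1)
  rw [uu, uu, hfun, hprod]
  have hD' : DD (Function.update (fun j => x j + (k j : ℂ)) i (x i + (k i + 1 : ℕ))) =
      DD (fun j => x j + (k j : ℂ)) * (∏ j ∈ univ.erase i, (x i + (k i + 1 : ℕ) - (x j + k j))) /
        ∏ j ∈ univ.erase i, ((x i + (k i : ℂ)) - (x j + k j)) := by
    rw [eq_div_iff h1]; exact hD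
  rw [hD']
  generalize ∏ j ∈ univ.erase i, ((x i + (k i : ℂ)) - (x j + k j)) = Q1 at *
  generalize ∏ j ∈ univ.erase i, (x i + (k i + 1 : ℕ) - (x j + k j)) = Q2 at *
  generalize ∏ j, (x i + (k i + 1 : ℕ) - x j) = Q3 at *
  generalize DD x = d
  generalize (b + (x i + k i)) / (c + (x i + k i)) = e
  field_simp

/-- index set -/
def TT (r M : ℕ) : Finset (Fin r → ℕ) :=
  (Finset.Iic (fun _ : Fin r => M)).filter (fun k : Fin r → ℕ => ∑ i, k i ≤ M)

theorem mem_TT {r M : ℕ} {k : Fin r → ℕ} : k ∈ TT r M ↔ ∑ i, k i ≤ M := by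
  simp only [TT, Finset.mem_filter, Finset.mem_Iic, and_iff_right_iff_imp]
  intro h i
  exact (Finset.single_le_sum (f := k) (fun _ _ => Nat.zero_le _) (Finset.mem_univ i)).trans h

theorem sum_update_succ {r : ℕ} (k : Fin r → ℕ) (i : Fin r) :
    ∑ j, Function.update k i (k i + 1) j = ∑ j, k j + 1 := by
  rw [Finset.sum_update_of_mem (Finset.mem_univ i), ← Finset.add_sum_erase _ k (Finset.mem_univ i),
    Finset.sdiff_singleton_eq_erase]
  ring

open Finset in
theorem main_aux {r : ℕ} (a x : Fin r → ℂ) (b : ℂ)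
    (hx : ∀ i j : Fin r, i ≠ j → ∀ m : ℤ, x i - x j ≠ (m : ℂ)) (M : ℕ) :
    ∀ c : ℂ, (∀ i : Fin r, ∀ m < M, c + x i + (m : ℕ) ≠ 0) →
    ∑ k ∈ TT r M, uu a x b c k *
      (rf (c - ∑ j, a j - b) (M - ∑ i, k i) / (M - ∑ i, k i).factorial) =
    rf (c - b) M / M.factorial * ∏ i, rf (c + x i - a i) M / rf (c + x i) M := by
  have hDx : DD x ≠ 0 := by
    rw [DD, prod_ne_zero_iff]; intro i _
    rw [prod_ne_zero_iff]; intro j _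
    split_ifs with h
    · simpa using hx i j h.ne 0
    · exact one_ne_zero
  induction M with
  | zero =>
    intro c _
    have : TT r 0 = {0} := by
      ext k; rw [mem_TT, mem_singleton]
      simp [funext_iff]
    rw [this, sum_singleton]
    simp [uu, gg, rf_zero, hDx]
  | succ M ih =>
    intro c hc
    have ih' := ih (c + 1) (fun i m hm h => hc i (m+1) (by omega) (by
      push_cast; linear_combination h))
    have hinj : ∀ k : Fin r → ℕ, Function.Injective (fun i => x i + (k i : ℂ)) := by
      intro k i j h
      by_contra hij
      apply hx i j hij ((k j : ℤ) - k i)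
      push_cast; simp only at h; linear_combination h
    set z : ℂ := c - ∑ j, a j - b with hz
    have hz1 : c + 1 - ∑ j, a j - b = z + 1 := by rw [hz]; ring
    rw [hz1] at ih'
    have hterm : ∀ k ∈ TT r M, uu a x b (c+1) k * ((c - b) * ∏ j, (c - (a j - x j)) / (c + x j)) =
        uu a x b c k * (z - (∑ i, k i : ℕ)) +
        ∑ i, uu a x b (c) (Function.update k i (k i + 1)) *
          ((∏ j, (x i + (k i + 1 : ℕ) - x j)) /
        ∏ j ∈ univ.erase i, ((x i + (k i + 1 : ℕ)) - (x j + k j))) := by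
      intro k hk
      rw [mem_TT] at hk
      have hki : ∀ i, k i ≤ M := fun i =>
        (Finset.single_le_sum (f := k) (fun _ _ => Nat.zero_le _) (Finset.mem_univ i)).trans hk
      have hck : ∀ i, c + (x i + (k i : ℂ)) ≠ 0 := fun i => by
        rw [← add_assoc]; exact hc i (k i) (by have := hki i; omega)
      have hc0 : ∀ i, c + x i ≠ 0 := fun i => by simpa using hc i 0 (by omega)
      have key := pf_one (fun j => a j - x j) (fun i => x i + (k i : ℂ)) b c (hinj k) hck
      have hS : c - b - ∑ j, (a j - x j + (x j + (k j : ℂ))) = z - (∑ i, k i : ℕ) := by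
        rw [hz]; push_cast
        have : ∑ j, (a j - x j + (x j + (k j : ℂ))) = ∑ j, a j + ∑ j, (k j : ℂ) := by
          rw [← sum_add_distrib]; exact sum_congr rfl fun j _ => by ring
        rw [this]; ring
      rw [hS] at key
      simp only [← uu_shift a x b c hx k, ← mul_sum, ← mul_add]
      rw [← key]
      have hg : ∀ i, gg a x b (c+1) i (k i) * ((c - (a i - x i)) / (c + x i)) =
          gg a x b c i (k i) * ((c - (a i - x i)) / (c + (x i + k i))) := by
        intro i
        have h3 : rf (c + x i) (k i) * (c + (x i + k i)) = (c + x i) * rf (c + 1 + x i) (k i) := by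
          rw [← add_assoc, ← rf_succ, rf_succ', add_right_comm]
        have h4 := hck i
        have h5 := hc0 i
        simp only [gg]
        have h6 : rf (b + x i) (k i) / rf (c + 1 + x i) (k i) / (c + x i) =
            rf (b + x i) (k i) / rf (c + x i) (k i) / (c + (x i + k i)) := by
          rw [div_div, div_div, h3, mul_comm (c + x i)]
        linear_combination (c - (a i - x i)) * (∏ j, rf (a j + x i - x j) (k i) / rf (1 + x i - x j) (k i)) * h6
      have hgp := prod_congr (rfl : (univ : Finset (Fin r)) = univ) (fun i _ => hg i)
      rw [prod_mul_distrib, prod_mul_distrib] at hgp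
      simp only [uu]
      linear_combination (DD (fun i => x i + (k i : ℂ)) / DD x) * (c - b) * hgp
    have hR : (M + 1 : ℂ) * (rf (c - b) (M+1) / (M+1).factorial *
          ∏ i, rf (c + x i - a i) (M+1) / rf (c + x i) (M+1)) =
        (rf (c + 1 - b) M / M.factorial * ∏ i, rf (c + 1 + x i - a i) M / rf (c + 1 + x i) M) *
        ((c - b) * ∏ j, (c - (a j - x j)) / (c + x j)) := by
      have h1 : ∏ i, rf (c + x i - a i) (M+1) / rf (c + x i) (M+1) =
          (∏ i, rf (c + 1 + x i - a i) M / rf (c + 1 + x i) M) *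
            ∏ j, (c - (a j - x j)) / (c + x j) := by
        rw [← prod_mul_distrib]
        refine prod_congr rfl fun i _ => ?_
        rw [rf_succ', rf_succ', mul_div_mul_comm, mul_comm]
        congr 2
        · congr 1; ring
        · congr 1; ring
        · ring
      have hM : (M + 1 : ℂ) ≠ 0 := by exact_mod_cast Nat.succ_ne_zero M
      have hf : (M.factorial : ℂ) ≠ 0 := by exact_mod_cast M.factorial_ne_zero
      rw [h1, rf_succ', Nat.factorial_succ, show c - b + 1 = c + 1 - b by ring]
      push_cast
      field_simp
    have hM : (M + 1 : ℂ) ≠ 0 := by exact_mod_cast Nat.succ_ne_zero M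
    apply mul_left_cancel₀ hM
    rw [hR, ← ih', sum_mul, mul_sum]
    have hsplit : ∀ k ∈ TT r M, uu a x b (c+1) k *
        (rf (z+1) (M - ∑ i, k i) / (M - ∑ i, k i).factorial) *
        ((c - b) * ∏ j, (c - (a j - x j)) / (c + x j)) =
        uu a x b c k * (((M + 1 - ∑ i, k i : ℕ) : ℂ) * (rf (z+1) (M - ∑ i, k i) *
          (z - (∑ i, k i : ℕ))) / (M + 1 - ∑ i, k i).factorial) +
        ∑ i, uu a x b (c) (Function.update k i (k i + 1)) *
          ((∏ j, (x i + (k i + 1 : ℕ) - x j)) /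
        ∏ j ∈ univ.erase i, ((x i + (k i + 1 : ℕ)) - (x j + k j))) *
        (rf (z+1) (M - ∑ i, k i) / (M - ∑ i, k i).factorial) := by
      intro k hk
      rw [← sum_mul]
      have h := hterm k hk
      rw [mem_TT] at hk
      have h1 : M + 1 - ∑ i, k i = (M - ∑ i, k i) + 1 := by omega
      have h2 : ((M + 1 - ∑ i, k i : ℕ) : ℂ) * (rf (z+1) (M - ∑ i, k i) *
          (z - (∑ i, k i : ℕ))) / (M + 1 - ∑ i, k i).factorial =
          rf (z+1) (M - ∑ i, k i) * (z - (∑ i, k i : ℕ)) / (M - ∑ i, k i).factorial := by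
        rw [h1, Nat.factorial_succ, Nat.cast_mul]
        rw [mul_div_mul_left]
        exact Nat.cast_ne_zero.mpr (Nat.succ_ne_zero _)
      rw [h2]
      linear_combination (rf (z+1) (M - ∑ i, k i) / (M - ∑ i, k i).factorial) * h
    rw [sum_congr rfl hsplit, sum_add_distrib, sum_comm]
    have hA : ∑ k ∈ TT r M, uu a x b c k * (((M + 1 - ∑ i, k i : ℕ) : ℂ) *
          (rf (z+1) (M - ∑ i, k i) *
          (z - (∑ i, k i : ℕ))) / (M + 1 - ∑ i, k i).factorial) =
        ∑ k ∈ TT r (M+1), uu a x b c k * (((M + 1 - ∑ i, k i : ℕ) : ℂ) *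
          (rf (z+1) (M - ∑ i, k i) *
          (z - (∑ i, k i : ℕ))) / (M + 1 - ∑ i, k i).factorial) := by
      apply sum_subset
      · intro k hk; rw [mem_TT] at *; omega
      · intro k hk hk'
        rw [mem_TT] at *
        have : M + 1 - ∑ i, k i = 0 := by omega
        rw [this]; simp
    have hB : ∀ i : Fin r, ∑ k ∈ TT r M, uu a x b (c) (Function.update k i (k i + 1)) *
          ((∏ j, (x i + (k i + 1 : ℕ) - x j)) /
        ∏ j ∈ univ.erase i, ((x i + (k i + 1 : ℕ)) - (x j + k j))) *
        (rf (z+1) (M - ∑ i, k i) / (M - ∑ i, k i).factorial) =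
        ∑ k ∈ TT r (M+1), uu a x b c k *
          ((∏ j, (x i + k i - x j)) / ∏ j ∈ univ.erase i, ((x i + k i) - (x j + k j))) *
        (rf (z+1) (M + 1 - ∑ i, k i) / (M + 1 - ∑ i, k i).factorial) := by
      intro i
      apply sum_of_injOn (fun k => Function.update k i (k i + 1))
      · intro k _ l _ h
        funext j
        have := congrFun h j
        by_cases hj : j = i
        · subst hj; simpa using this
        · simpa [hj] using this
      · intro k hk
        rw [mem_coe, mem_TT] at *
        rw [sum_update_succ]; omega
      · intro k hk hk'
        have hk0 : k i = 0 := by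
          by_contra h0
          apply hk'
          have hup : Function.update (Function.update k i (k i - 1)) i
              (Function.update k i (k i - 1) i + 1) = k := by
            funext j
            by_cases hj : j = i
            · subst hj; simp; omega
            · simp [hj]
          refine ⟨Function.update k i (k i - 1), ?_, hup⟩
          rw [mem_coe, mem_TT] at *
          have := sum_update_succ (Function.update k i (k i - 1)) i
          rw [hup] at this
          omega
        rw [prod_eq_zero (mem_univ i) (by simp [hk0])]
        simp
      · intro k hk
        simp only [sum_update_succ, Function.update_self, Nat.add_sub_add_right]
        congr 3
        refine prod_congr rfl fun j hj => ?_
        rw [Function.update_of_ne (ne_of_mem_erase hj)]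
    rw [hA, sum_congr rfl (fun i _ => hB i), sum_comm, ← sum_add_distrib]
    refine sum_congr rfl fun k hk => ?_
    rw [mem_TT] at hk
    have h2 := pf_sum x (fun i => x i + (k i : ℂ)) (hinj k)
    have h3 : ∑ j, (x j + (k j : ℂ) - x j) = (∑ i, k i : ℕ) := by simp
    rw [h3] at h2
    rw [← sum_mul, ← mul_sum, h2]
    have := coef_id z M (∑ i, k i) hk
    linear_combination (-1 : ℂ) * (uu a x b c k) * this

theorem poch_nat (a : ℂ) (n : ℕ) : poch a n = rf a n := by
  simp [poch, rf]
/-- The `A_r` Pfaff–Saalschütz summation (Milne); the sum ranges over all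
`k ∈ ℕ^r` with `k_1 + ⋯ + k_r ≤ M` (each such `k` satisfies `k_i ≤ M`, so the
index set is the filtered box below). -/
theorem Ar_pfaff_saalschuetz (r : ℕ) (hr : 1 ≤ r) (M : ℕ)
    (a x : Fin r → ℂ) (b c : ℂ)
    (hx : ∀ i j : Fin r, i ≠ j → ∀ m : ℤ, x i - x j ≠ (m : ℂ))
    (hd1 : ∀ (i j : Fin r) (m : ℕ), m ≤ M → poch (1 + x i - x j) m ≠ 0)
    (hd2 : ∀ (i : Fin r) (m : ℕ), m ≤ M → poch (c + x i) m ≠ 0)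
    (hd3 : ∀ m : ℕ, m ≤ M → poch ((∑ j, a j) + b + 1 - M - c) m ≠ 0)
    (hd4 : poch (c - (∑ j, a j) - b) M ≠ 0) :
    (∑ k ∈ (Finset.Iic (fun _ : Fin r => M)).filter (fun k : Fin r → ℕ => ∑ i, k i ≤ M),
        (∏ i : Fin r, ∏ j : Fin r,
            if i < j then (x i + k i - x j - (k j : ℂ)) / (x i - x j) else 1) *
          (∏ i : Fin r, ∏ j : Fin r,
            poch (a j + x i - x j) (k i) / poch (1 + x i - x j) (k i)) *
          (∏ i : Fin r, poch (b + x i) (k i) / poch (c + x i) (k i)) *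
          (poch (-(M : ℂ)) (∑ i, (k i : ℤ)) /
            poch ((∑ j, a j) + b + 1 - M - c) (∑ i, (k i : ℤ)))) =
      poch (c - b) M / poch (c - (∑ j, a j) - b) M *
        ∏ i : Fin r, poch (c + x i - a i) M / poch (c + x i) M := by
  have hsum : ∀ k : Fin r → ℕ, (∑ i, (k i : ℤ)) = ((∑ i, k i : ℕ) : ℤ) := fun k => by push_cast; rfl
  simp only [hsum, poch_nat] at *
  have hmain := main_aux a x b hx M c (fun i m hm => rf_ne _ M (hd2 i M le_rfl) m hm)
  have hM : (M.factorial : ℂ) ≠ 0 := by exact_mod_cast M.factorial_ne_zero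
  have hterm : ∀ k ∈ TT r M, (∏ i : Fin r, ∏ j : Fin r,
            if i < j then (x i + k i - x j - (k j : ℂ)) / (x i - x j) else 1) *
          (∏ i : Fin r, ∏ j : Fin r,
            rf (a j + x i - x j) (k i) / rf (1 + x i - x j) (k i)) *
          (∏ i : Fin r, rf (b + x i) (k i) / rf (c + x i) (k i)) *
          (rf (-(M : ℂ)) (∑ i, k i) /
            rf ((∑ j, a j) + b + 1 - M - c) (∑ i, k i)) =
      M.factorial / rf (c - (∑ j, a j) - b) M * (uu a x b c k *
      (rf (c - ∑ j, a j - b) (M - ∑ i, k i) / (M - ∑ i, k i).factorial)) := by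
    intro k hk
    rw [mem_TT] at hk
    have h1 : (∏ i : Fin r, ∏ j : Fin r,
            if i < j then (x i + k i - x j - (k j : ℂ)) / (x i - x j) else 1) =
        DD (fun i => x i + (k i : ℂ)) / DD x := by
      simp only [DD, ← Finset.prod_div_distrib]
      refine Finset.prod_congr rfl fun i _ => Finset.prod_congr rfl fun j _ => ?_
      split_ifs
      · congr 1; ring
      · simp
    have h2 := rf_rev M (c - (∑ j, a j) - b) (∑ i, k i) hk
    have h3 := rf_rev M 1 (∑ i, k i) hk
    rw [rf_one, rf_one, show (1 - (M : ℂ) - 1) = -M by ring] at h3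
    rw [show 1 - (M : ℂ) - (c - (∑ j, a j) - b) = (∑ j, a j) + b + 1 - M - c by ring] at h2
    have h4 := hd3 _ hk
    have h5 : ((M - ∑ i, k i).factorial : ℂ) ≠ 0 := by exact_mod_cast Nat.factorial_ne_zero _
    have h6 : ((-1 : ℂ) ^ (∑ i, k i)) * (-1 : ℂ) ^ (∑ i, k i) = 1 := by
      rw [← mul_pow]; simp
    have hcoef : rf (-(M : ℂ)) (∑ i, k i) / rf ((∑ j, a j) + b + 1 - M - c) (∑ i, k i) =
        M.factorial / rf (c - (∑ j, a j) - b) M *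
        (rf (c - ∑ j, a j - b) (M - ∑ i, k i) / (M - ∑ i, k i).factorial) := by
      rw [div_mul_div_comm, div_eq_div_iff h4 (mul_ne_zero hd4 h5)]
      generalize rf (-(M : ℂ)) (∑ i, k i) = t1 at *
      generalize rf ((∑ j, a j) + b + 1 - M - c) (∑ i, k i) = t2 at *
      generalize rf (c - ∑ j, a j - b) (M - ∑ i, k i) = t3 at *
      generalize rf (c - ∑ j, a j - b) M = t4 at *
      linear_combination t4 * h3 - M.factorial * h2
    rw [hcoef, h1]
    simp only [uu, gg, Finset.prod_mul_distrib]
    ring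
  change ∑ k ∈ TT r M, _ = _
  rw [Finset.sum_congr rfl hterm, ← Finset.mul_sum, hmain]
  field_simp
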